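/- Let b ≥ 2 and n, i be natural numbers such that i is digit-wise dominated by n in base b. Then for every s ∈ ℕ, the s-th base-b digit of n − i equals the s-th base-b digit of n minus the s-th base-b digit of i; in particular, n − i is also digit-wise dominated by n in base b. -/

import Mathlib

/-!
Comparing digits from the bottom up gives `i % b ^ s ≤ n % b ^ s` for every `s`. Hence in `n - i`
nothing is borrowed across position `s`, so that dividing by `b ^ s` commutes with the subtraction;
the digit at `s` then subtracts because it does not borrow either.
-/

/-- Digit-wise domination of `i` by `n` in base `b`. It is stated through the quotients
`x / b ^ s % b` rather than the list `Nat.digits b x`, so that missing leading digits read as `0`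
and numbers of different lengths are comparable. -/
def DigitwiseLE (b i n : ℕ) : Prop :=
  ∀ s : ℕ, i / b ^ s % b ≤ n / b ^ s % b

section NoBorrow

variable {m n i : ℕ}

theorem sub_eq_mul_div_sub_add_mod_sub (hin : i ≤ n) (hmod : i % m ≤ n % m) :
    n - i = m * (n / m - i / m) + (n % m - i % m) := by
  have hdiv : m * (i / m) ≤ m * (n / m) := Nat.mul_le_mul_left m (Nat.div_le_div_right hin)
  have hn := Nat.div_add_mod n m
  have hi := Nat.div_add_mod i m
  rw [Nat.mul_sub]
  lia

theorem sub_mod_of_mod_le (hin : i ≤ n) (hmod : i % m ≤ n % m) :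
    (n - i) % m = n % m - i % m := by
  have hself : (n % m - i % m) % m = n % m - i % m := by
    rcases m.eq_zero_or_pos with rfl | hm
    · exact Nat.mod_zero _
    · exact Nat.mod_eq_of_lt ((Nat.sub_le _ _).trans_lt (Nat.mod_lt n hm))
  rw [sub_eq_mul_div_sub_add_mod_sub hin hmod, Nat.mul_add_mod, hself]

theorem sub_div_of_mod_le (hmod : i % m ≤ n % m) : (n - i) / m = n / m - i / m := by
  rcases m.eq_zero_or_pos with rfl | hm
  · simp only [Nat.div_zero, Nat.sub_self]
  rcases le_total i n with hin | hni
  · have hlt : n % m - i % m < m := (Nat.sub_le _ _).trans_lt (Nat.mod_lt n hm)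
    rw [sub_eq_mul_div_sub_add_mod_sub hin hmod, Nat.mul_add_div hm,
      Nat.div_eq_of_lt hlt, Nat.add_zero]
  · rw [Nat.sub_eq_zero_of_le hni, Nat.sub_eq_zero_of_le (Nat.div_le_div_right hni), Nat.zero_div]

end NoBorrow

namespace DigitwiseLE

variable {b n i : ℕ}

theorem mod_pow_le (h : DigitwiseLE b i n) (s : ℕ) : i % b ^ s ≤ n % b ^ s := by
  induction s with
  | zero => simp only [pow_zero, Nat.mod_one, le_refl]
  | succ s ih =>
    rw [Nat.mod_pow_succ, Nat.mod_pow_succ]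
    gcongr
    exact h s

theorem le (h : DigitwiseLE b i n) (hb : 2 ≤ b) : i ≤ n :=
  calc
    i = i % b ^ i := (Nat.mod_eq_of_lt (Nat.lt_pow_self hb)).symm
    _ ≤ n % b ^ i := h.mod_pow_le i
    _ ≤ n := Nat.mod_le n _

theorem sub_div_pow_mod (h : DigitwiseLE b i n) (hb : 2 ≤ b) (s : ℕ) :
    (n - i) / b ^ s % b = n / b ^ s % b - i / b ^ s % b := by
  have hdiv : i / b ^ s ≤ n / b ^ s := Nat.div_le_div_right (h.le hb)
  rw [sub_div_of_mod_le (h.mod_pow_le s), sub_mod_of_mod_le hdiv (h s)]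

theorem sub (h : DigitwiseLE b i n) (hb : 2 ≤ b) : DigitwiseLE b (n - i) n := fun s =>
  (h.sub_div_pow_mod hb s).trans_le (Nat.sub_le _ _)

end DigitwiseLE

theorem stmt_13 (b n i : ℕ) (hb : 2 ≤ b)
    (hdom : ∀ s : ℕ, (i / b ^ s) % b ≤ (n / b ^ s) % b) :
    (∀ s : ℕ, ((n - i) / b ^ s) % b = (n / b ^ s) % b - (i / b ^ s) % b) ∧
      ∀ s : ℕ, ((n - i) / b ^ s) % b ≤ (n / b ^ s) % b := by
  have h : DigitwiseLE b i n := hdom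
  exact ⟨h.sub_div_pow_mod hb, h.sub hb⟩
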